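/- Assume M̄ ≥ 2D. Let m ∈ T with M_m = M̄ and M_k ∈ {M̄, a M̄} for all indices k up to m, and suppose condition (D) holds at every index k ∈ {m−1, m, m+1, m+2, m+3}. Then there exists m₀ ∈ {m+1, m+2, m+3} with m₀ ∈ T, M_{m₀} = M̄, and M_k ∈ {M̄, a M̄} for all k with m < k ≤ m₀; moreover no index strictly between m and m₀ belongs to T. -/

import Mathlib

/-!
Let `e k = x (t_k) - y_k`. Since `h k` is the sign of `e k`, a step without sign change lowers
`|e|` by `M_k δ`, up to the increment of `x`, while a sign change at `k + 1` leaves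
`|e (k + 1)| ≤ M_k δ + D δ`. As `m ∈ T` and `M_m = M̄`, the preceding step size is at most `a M̄`,
so `|e m| ≤ (a M̄ + D) δ`. If none of the next three indices were in `T`, the step sizes would be
`M̄, M̄, a M̄`, and so
`|e (m + 3)| ≤ (a M̄ + D) δ - (2 M̄ + a M̄) δ + 3 D δ = (4 D - 2 M̄) δ ≤ 0`; but a vanishing error
forces a sign change.
-/

noncomputable section

/-- Membership in the set `T = {k ≥ 1 : h_{k-1} h_k < 0}` of sign-change indices. -/
def Tmem (h : ℤ → ℝ) (k : ℕ) : Prop := 1 ≤ k ∧ h ((k : ℤ) - 1) * h (k : ℤ) < 0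

/-- The modified adaptive delta modulation system: sequences `h_k` (binary symbols,
indexed by `ℤ` so that `h (-1) = 1` makes sense), `y_k` (estimates at sample points)
and `M_k` (step sizes), driven by the sampled signal `x (k δ)`. -/
structure ADM (δ a Mbar M₀ y₀ : ℝ) (x : ℝ → ℝ) where
  h : ℤ → ℝ
  y : ℕ → ℝ
  M : ℕ → ℝ
  h_init : h (-1) = 1
  h_lt : ∀ k : ℕ, y k < x (k * δ) → h (k : ℤ) = 1
  h_gt : ∀ k : ℕ, x (k * δ) < y k → h (k : ℤ) = -1
  h_eq : ∀ k : ℕ, y k = x (k * δ) → h (k : ℤ) = - h ((k : ℤ) - 1)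
  y_zero : y 0 = y₀
  y_rec : ∀ k : ℕ, y (k + 1) = y k + h (k : ℤ) * M k * δ
  M_zero : M 0 = M₀
  M_pos : ∀ k : ℕ, 0 < M k
  M_rec_T : ∀ k : ℕ, Tmem h k → M k = max (a⁻¹ * M (k - 1)) Mbar
  M_rec_prev : ∀ k : ℕ, 1 ≤ k → ¬ Tmem h k → Tmem h (k - 1) → M k = M (k - 1)
  M_rec_grow : ∀ k : ℕ, 1 ≤ k → ¬ Tmem h k → ¬ Tmem h (k - 1) → M k = a * M (k - 1)

/-- Condition (D) at index `k`: `sup_{t ∈ [t_k, t_{k+1}]} |x(t) − x(t_k)| ≤ D δ`. -/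
def condD (δ D : ℝ) (x : ℝ → ℝ) (k : ℕ) : Prop :=
  ∀ t ∈ Set.Icc ((k : ℝ) * δ) (((k : ℝ) + 1) * δ), |x t - x ((k : ℝ) * δ)| ≤ D * δ

theorem tmem_succ_iff {h : ℤ → ℝ} {k : ℕ} : Tmem h (k + 1) ↔ h k * h (k + 1 : ℕ) < 0 := by
  simp [Tmem]

theorem condD.abs_sub_le {δ D : ℝ} {x : ℝ → ℝ} {k : ℕ} (h : condD δ D x k) (hδ : 0 ≤ δ) :
    |x ((k + 1 : ℕ) * δ) - x (k * δ)| ≤ D * δ := by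
  push_cast
  exact h _ ⟨by linarith, le_rfl⟩

namespace ADM

variable {δ a Mbar M₀ y₀ : ℝ} {x : ℝ → ℝ} (S : ADM δ a Mbar M₀ y₀ x)

/-- The tracking error `x (t_k) - y_k` at the `k`-th sample point. -/
def err (k : ℕ) : ℝ := x (k * δ) - S.y k

theorem h_succ_of_err_eq_zero {k : ℕ} (hk : S.err (k + 1) = 0) :
    S.h (k + 1 : ℕ) = -S.h k := by
  simpa using S.h_eq (k + 1) (sub_eq_zero.mp hk).symm

theorem h_eq_one_or_neg_one (k : ℕ) : S.h k = 1 ∨ S.h k = -1 := by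
  induction k with
  | zero =>
    rcases lt_trichotomy (S.y 0) (x ((0 : ℕ) * δ)) with hlt | heq | hgt
    · exact Or.inl (S.h_lt 0 hlt)
    · exact Or.inr (by simpa [S.h_init] using S.h_eq 0 heq)
    · exact Or.inr (S.h_gt 0 hgt)
  | succ k ih =>
    rcases lt_trichotomy (S.y (k + 1)) (x ((k + 1 : ℕ) * δ)) with hlt | heq | hgt
    · exact Or.inl (S.h_lt _ hlt)
    · rw [S.h_succ_of_err_eq_zero (sub_eq_zero.mpr heq.symm), neg_inj, neg_eq_iff_eq_neg]
      exact ih.symm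
    · exact Or.inr (S.h_gt _ hgt)

theorem h_mul_self (k : ℕ) : S.h k * S.h k = 1 :=
  mul_self_eq_one_iff.mpr (S.h_eq_one_or_neg_one k)

theorem abs_h (k : ℕ) : |S.h k| = 1 :=
  (abs_eq_abs.mpr (S.h_eq_one_or_neg_one k)).trans abs_one

theorem h_succ_of_tmem {k : ℕ} (hk : Tmem S.h (k + 1)) : S.h (k + 1 : ℕ) = -S.h k := by
  rw [tmem_succ_iff] at hk
  rcases S.h_eq_one_or_neg_one k with h₀ | h₀ <;>
    rcases S.h_eq_one_or_neg_one (k + 1) with h₁ | h₁ <;>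
    rw [h₀, h₁] at hk ⊢ <;> linarith

theorem h_succ_of_not_tmem {k : ℕ} (hk : ¬ Tmem S.h (k + 1)) : S.h (k + 1 : ℕ) = S.h k := by
  rw [tmem_succ_iff] at hk
  rcases S.h_eq_one_or_neg_one k with h₀ | h₀ <;>
    rcases S.h_eq_one_or_neg_one (k + 1) with h₁ | h₁ <;>
    rw [h₀, h₁] at hk ⊢ <;> linarith

theorem tmem_succ_of_err_eq_zero {k : ℕ} (hk : S.err (k + 1) = 0) : Tmem S.h (k + 1) := by
  rw [tmem_succ_iff, S.h_succ_of_err_eq_zero hk, mul_neg, S.h_mul_self]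
  exact neg_one_lt_zero

theorem h_mul_err (k : ℕ) : S.h k * S.err k = |S.err k| := by
  rcases lt_trichotomy (S.y k) (x (k * δ)) with hlt | heq | hgt
  · rw [S.h_lt k hlt, one_mul, abs_of_pos (show 0 < S.err k from sub_pos.mpr hlt)]
  · have herr : S.err k = 0 := sub_eq_zero.mpr heq.symm
    rw [herr, mul_zero, abs_zero]
  · rw [S.h_gt k hgt, neg_one_mul, abs_of_neg (show S.err k < 0 from sub_neg.mpr hgt)]

theorem abs_h_mul_err_succ_sub (k : ℕ) :
    |S.h k * S.err (k + 1) - (|S.err k| - S.M k * δ)| = |x ((k + 1 : ℕ) * δ) - x (k * δ)| := by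
  have key : S.h k * S.err (k + 1) - (|S.err k| - S.M k * δ) =
      S.h k * (x ((k + 1 : ℕ) * δ) - x (k * δ)) := by
    rw [← S.h_mul_err, err, err, S.y_rec]
    linear_combination -(S.M k * δ) * S.h_mul_self k
  rw [key, abs_mul, S.abs_h, one_mul]

theorem abs_err_succ_le_of_tmem {k : ℕ} (hk : Tmem S.h (k + 1)) :
    |S.err (k + 1)| ≤ S.M k * δ + |x ((k + 1 : ℕ) * δ) - x (k * δ)| := by
  have hsign : |S.err (k + 1)| = -(S.h k * S.err (k + 1)) := by
    rw [← S.h_mul_err, S.h_succ_of_tmem hk, neg_mul]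
  have hstep := neg_le_of_abs_le (S.abs_h_mul_err_succ_sub k).le
  linarith [abs_nonneg (S.err k)]

theorem abs_err_succ_le_of_not_tmem {k : ℕ} (hk : ¬ Tmem S.h (k + 1)) :
    |S.err (k + 1)| ≤ |S.err k| - S.M k * δ + |x ((k + 1 : ℕ) * δ) - x (k * δ)| := by
  have hsign : |S.err (k + 1)| = S.h k * S.err (k + 1) := by
    rw [← S.h_mul_err, S.h_succ_of_not_tmem hk]
  have hstep := le_of_abs_le (S.abs_h_mul_err_succ_sub k).le
  linarith

theorem M_succ_eq_iff_of_tmem (ha : 0 < a) {k : ℕ} (hk : Tmem S.h (k + 1)) :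
    S.M (k + 1) = Mbar ↔ S.M k ≤ a * Mbar := by
  rw [S.M_rec_T _ hk, max_eq_right_iff, Nat.add_sub_cancel, inv_mul_le_iff₀ ha]

theorem M_eq_pow_mul_of_forall_not_tmem {m : ℕ} (hm : Tmem S.h m) {j : ℕ}
    (hT : ∀ k, m < k → k ≤ m + 1 + j → ¬ Tmem S.h k) : S.M (m + 1 + j) = a ^ j * S.M m := by
  induction j with
  | zero =>
    rw [pow_zero, one_mul]
    exact S.M_rec_prev (m + 1) (by omega) (hT _ (by omega) le_rfl) hm
  | succ j ih =>
    have hgrow : S.M (m + 1 + j + 1) = a * S.M (m + 1 + j) :=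
      S.M_rec_grow _ (by omega) (hT _ (by omega) le_rfl) (hT _ (by omega) (by omega))
    rw [← add_assoc, hgrow, ih fun k hk hk' => hT k hk (by omega), pow_succ', mul_assoc]

theorem exists_tmem_le_add_three {D : ℝ} (hδ : 0 ≤ δ) (ha : 0 < a) (hMD : 2 * D ≤ Mbar) {m : ℕ}
    (hm : Tmem S.h m) (hMm : S.M m = Mbar)
    (hx : ∀ k : ℕ, m ≤ k + 1 → k ≤ m + 2 → |x ((k + 1 : ℕ) * δ) - x (k * δ)| ≤ D * δ) :
    ∃ k, m < k ∧ k ≤ m + 3 ∧ Tmem S.h k := by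
  by_contra! hT
  obtain ⟨n, rfl⟩ : ∃ n, m = n + 1 := Nat.exists_eq_add_of_le' hm.1
  have hMn : S.M n * δ ≤ a * Mbar * δ := by
    gcongr
    exact (S.M_succ_eq_iff_of_tmem ha hm).mp hMm
  have hM₂ : S.M (n + 2) = Mbar := by
    simpa [hMm] using S.M_eq_pow_mul_of_forall_not_tmem hm (j := 0) fun k hk _ =>
      hT k hk (by omega)
  have hM₃ : S.M (n + 3) = a * Mbar := by
    simpa [hMm] using S.M_eq_pow_mul_of_forall_not_tmem hm (j := 1) fun k hk _ =>
      hT k hk (by omega)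
  have hT₄ : ¬ Tmem S.h (n + 4) := hT _ (by omega) le_rfl
  have herr₁ := S.abs_err_succ_le_of_tmem hm
  have herr₂ := S.abs_err_succ_le_of_not_tmem (hT (n + 2) (by omega) (by omega))
  have herr₃ := S.abs_err_succ_le_of_not_tmem (hT (n + 3) (by omega) (by omega))
  have herr₄ := S.abs_err_succ_le_of_not_tmem hT₄
  rw [hMm] at herr₂
  rw [hM₂] at herr₃
  rw [hM₃] at herr₄
  have hDδ : 2 * D * δ ≤ Mbar * δ := by gcongr
  have hnonpos : |S.err (n + 4)| ≤ 0 := by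
    linarith [hx n (by omega) (by omega), hx (n + 1) (by omega) (by omega),
      hx (n + 2) (by omega) (by omega), hx (n + 3) (by omega) (by omega)]
  exact hT₄ (S.tmem_succ_of_err_eq_zero (abs_nonpos_iff.mp hnonpos))

end ADM

theorem stmt9_general {δ a Mbar M₀ y₀ D : ℝ} {x : ℝ → ℝ} (hδ : 0 ≤ δ) (ha : 1 ≤ a)
    (hMD : 2 * D ≤ Mbar) (S : ADM δ a Mbar M₀ y₀ x) {m : ℕ} (hm : Tmem S.h m)
    (hMm : S.M m = Mbar)
    (hx : ∀ k : ℕ, m ≤ k + 1 → k ≤ m + 2 → |x ((k + 1 : ℕ) * δ) - x (k * δ)| ≤ D * δ) :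
    ∃ m₀ : ℕ, m < m₀ ∧ m₀ ≤ m + 3 ∧ Tmem S.h m₀ ∧ S.M m₀ = Mbar ∧
      (∀ k : ℕ, m < k → k ≤ m₀ → S.M k = Mbar ∨ S.M k = a * Mbar) ∧
      (∀ k : ℕ, m < k → k < m₀ → ¬ Tmem S.h k) := by
  classical
  have ha₀ : 0 < a := one_pos.trans_le ha
  have hflip := S.exists_tmem_le_add_three hδ ha₀ hMD hm hMm hx
  obtain ⟨hlt, hle, hT⟩ := Nat.find_spec hflip
  have hmin : ∀ k, m < k → k < Nat.find hflip → ¬ Tmem S.h k := fun k hk hk' hTk =>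
    Nat.find_min hflip hk' ⟨hk, by omega, hTk⟩
  generalize Nat.find hflip = m₀ at hlt hle hT hmin
  have hM : ∀ k, m ≤ k → k < m₀ → S.M k = Mbar ∨ S.M k = a * Mbar := by
    intro k hk hk'
    have hrun (j : ℕ) (hj : m + 1 + j < m₀) : S.M (m + 1 + j) = a ^ j * S.M m :=
      S.M_eq_pow_mul_of_forall_not_tmem hm fun i hi hi' => hmin i hi (by omega)
    obtain rfl | rfl | rfl : k = m ∨ k = m + 1 + 0 ∨ k = m + 1 + 1 := by omega
    · exact Or.inl hMm
    · exact Or.inl (by simpa [hMm] using hrun 0 hk')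
    · exact Or.inr (by simpa [hMm] using hrun 1 hk')
  have hMm₀ : S.M m₀ = Mbar := by
    obtain ⟨n, rfl⟩ : ∃ n, m₀ = n + 1 := Nat.exists_eq_add_of_le' hT.1
    have hMbar : 0 ≤ Mbar := hMm ▸ (S.M_pos m).le
    refine (S.M_succ_eq_iff_of_tmem ha₀ hT).mpr ?_
    rcases hM n (by omega) (by omega) with hMn | hMn
    · exact hMn.trans_le (le_mul_of_one_le_left hMbar ha)
    · exact hMn.le
  refine ⟨m₀, hlt, hle, hT, hMm₀, fun k hk hk' => ?_, hmin⟩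
  rcases hk'.lt_or_eq with hk' | rfl
  exacts [hM k hk.le hk', Or.inl hMm₀]

/-- induction step in the proof of Theorem 1 (iii): if `M̄ ≥ 2D`,
`m ∈ T` with `M_m = M̄` and `M_k ∈ {M̄, a M̄}` for all `k ≤ m`, and condition (D) holds
at every index `k ∈ {m−1, …, m+3}`, then there is `m₀ ∈ {m+1, m+2, m+3}` with
`m₀ ∈ T`, `M_{m₀} = M̄`, `M_k ∈ {M̄, a M̄}` for all `m < k ≤ m₀`, and no index strictly
between `m` and `m₀` belongs to `T`. -/
theorem stmt9 (δ a Mbar M₀ y₀ D : ℝ) (x : ℝ → ℝ)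
    (hδ : 0 < δ) (ha : 1 < a) (ha2 : a ≤ 2) (hMbar : 0 < Mbar) (hM₀ : 0 < M₀)
    (hD : 0 < D) (hMD : 2 * D ≤ Mbar)
    (S : ADM δ a Mbar M₀ y₀ x)
    (m : ℕ) (hm : Tmem S.h m) (hMm : S.M m = Mbar)
    (hMall : ∀ k : ℕ, k ≤ m → S.M k = Mbar ∨ S.M k = a * Mbar)
    (hDcond : ∀ k : ℕ, m - 1 ≤ k → k ≤ m + 3 → condD δ D x k) :
    ∃ m₀ : ℕ, m < m₀ ∧ m₀ ≤ m + 3 ∧ Tmem S.h m₀ ∧ S.M m₀ = Mbar ∧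
      (∀ k : ℕ, m < k → k ≤ m₀ → S.M k = Mbar ∨ S.M k = a * Mbar) ∧
      (∀ k : ℕ, m < k → k < m₀ → ¬ Tmem S.h k) := by
  exact stmt9_general hδ.le ha.le hMD S hm hMm fun k hk hk' =>
    (hDcond k (by omega) (by omega)).abs_sub_le hδ.le
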